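/- Let G be the parallel composition of r ≥ 2 paths of lengths k_1,...,k_r, where the integers k_1,...,k_r all have the same parity, and let X be the projective toric subset parameterized by G. If all k_i are odd, then reg(G) ≥ (⌊k_1/2⌋ + ... + ⌊k_r/2⌋)(q−2); if all k_i are even, then reg(G) ≥ (k_1/2 + ... + k_r/2 − 1)(q−2). -/

import Mathlib

open MvPolynomial

/-- A finite multigraph without loops: each edge `e` has two distinct endpoints
`fst e` and `snd e`.  Multiple edges with the same endpoints are allowed. -/
structure Multigraph (V E : Type) : Type where
  fst : E → V
  snd : E → V
  ne : ∀ e, fst e ≠ snd e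

namespace Multigraph

variable {V E : Type}

/-- Vertex `v` is an endpoint of the edge `e`. -/
def Incident (G : Multigraph V E) (v : V) (e : E) : Prop :=
  G.fst e = v ∨ G.snd e = v

instance (G : Multigraph V E) [DecidableEq V] (v : V) : DecidablePred (G.Incident v) :=
  fun e => inferInstanceAs (Decidable (G.fst e = v ∨ G.snd e = v))

/-- The degree of a vertex: the number of edges incident to it. -/
noncomputable def degree (G : Multigraph V E) (v : V) : ℕ :=
  Nat.card {e : E // G.Incident v e}

/-- The graph has no isolated vertices. -/
def NoIsolated (G : Multigraph V E) : Prop :=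
  ∀ v : V, ∃ e : E, G.Incident v e

variable (K : Type) [Field K] [Fintype K]

/-- The point of the affine torus associated with an assignment `x` of nonzero
scalars to the vertices: its coordinate at an edge `e = {v,w}` is `x v * x w`. -/
def point (G : Multigraph V E) (x : V → Kˣ) : E → K :=
  fun e => (x (G.fst e) : K) * (x (G.snd e) : K)

/-- The projective toric subset `X` parameterized by `G`, realized as the set of
`Kˣ`-orbits (i.e. projective points) of the points `G.point K x`, `x : V → Kˣ`. -/
def toricSet (G : Multigraph V E) : Set (Set (E → K)) :=
  Set.range fun x : V → Kˣ => MulAction.orbit Kˣ (G.point K x)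

/-- The vanishing ideal `I(X)` of the projective toric subset parameterized by `G`:
the ideal of all polynomials each of whose homogeneous components vanishes at the
point `G.point K x` for every `x : V → Kˣ`. -/
def vanishingIdeal (G : Multigraph V E) : Ideal (MvPolynomial E K) where
  carrier := {f | ∀ (x : V → Kˣ) (d : ℕ), eval (G.point K x) (homogeneousComponent d f) = 0}
  zero_mem' := by intro x d; simp
  add_mem' := by
    intro a b ha hb x d
    rw [map_add, map_add, ha x d, hb x d, add_zero]
  smul_mem' := by
    intro c f hf x n
    rw [smul_eq_mul, ← sum_homogeneousComponent f, Finset.mul_sum, map_sum, map_sum]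
    refine Finset.sum_eq_zero fun d _ => ?_
    nth_rewrite 1 [← sum_homogeneousComponent c]
    rw [Finset.sum_mul, map_sum, map_sum]
    refine Finset.sum_eq_zero fun e _ => ?_
    have h1 : (homogeneousComponent e c * homogeneousComponent d f).IsHomogeneous (e + d) :=
      (homogeneousComponent_isHomogeneous e c).mul (homogeneousComponent_isHomogeneous d f)
    rw [homogeneousComponent_of_mem ((mem_homogeneousSubmodule _ _).mpr h1)]
    split_ifs
    · rw [map_mul, hf x d, mul_zero]
    · simp

/-- The Hilbert function of `S/I(X)`: the dimension over `K` of the degree-`d`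
homogeneous component of the quotient, realized as the image of the space of
degree-`d` homogeneous polynomials in the quotient. -/
noncomputable def hilbert (G : Multigraph V E) (d : ℕ) : ℕ :=
  Module.finrank K
    ((homogeneousSubmodule E K d).map (Ideal.Quotient.mkₐ K (G.vanishingIdeal K)).toLinearMap)

/-- The regularity `reg G`: the least `d` such that the Hilbert function of `S/I(X)`
at `d` equals the number of points of `X`. -/
noncomputable def reg (G : Multigraph V E) : ℕ :=
  sInf {d : ℕ | G.hilbert K d = (G.toricSet K).ncard}

/-- The graph obtained from `G` by deleting a vertex `v` and all edges incident
to it. -/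
def deleteVert (G : Multigraph V E) (v : V) :
    Multigraph {w : V // w ≠ v} {e : E // ¬ G.Incident v e} where
  fst e := ⟨G.fst e.1, fun h => e.2 (Or.inl h)⟩
  snd e := ⟨G.snd e.1, fun h => e.2 (Or.inr h)⟩
  ne e h := G.ne e.1 (congrArg Subtype.val h)

/-- The graph obtained from `G` by identifying the vertex `v₂` with the vertex `v₁`:
the edges are the same, and every endpoint equal to `v₂` is replaced by `v₁`.
This requires that `{v₁, v₂}` is a non-edge of `G`, so that no loops are created. -/
def identifyVert [DecidableEq V] (G : Multigraph V E) (v₁ v₂ : V) (h12 : v₁ ≠ v₂)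
    (h : ∀ e, ¬ (G.Incident v₁ e ∧ G.Incident v₂ e)) :
    Multigraph {w : V // w ≠ v₂} E where
  fst e := ⟨if G.fst e = v₂ then v₁ else G.fst e, by split_ifs with hh; exacts [h12, hh]⟩
  snd e := ⟨if G.snd e = v₂ then v₁ else G.snd e, by split_ifs with hh; exacts [h12, hh]⟩
  ne := by
    intro e heq
    rw [Subtype.ext_iff] at heq
    simp only at heq
    split_ifs at heq with h1 h2 h2
    · exact G.ne e (h1.trans h2.symm)
    · exact h e ⟨Or.inr heq.symm, Or.inl h1⟩
    · exact h e ⟨Or.inl heq, Or.inr h2⟩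
    · exact G.ne e heq

/-- The subgraph of `G` determined by a set `A` of edges of `G`, together with all
endpoints of those edges (so it has no isolated vertices). -/
def subgraph [DecidableEq V] (G : Multigraph V E) (A : Finset E) :
    Multigraph {v : V // ∃ e ∈ A, G.Incident v e} {e : E // e ∈ A} where
  fst e := ⟨G.fst e.1, e.1, e.2, Or.inl rfl⟩
  snd e := ⟨G.snd e.1, e.1, e.2, Or.inr rfl⟩
  ne e h := G.ne e.1 (congrArg Subtype.val h)

end Multigraph

/-- The vertex of the parallel composition of paths of lengths `k i` lying on the
`i`-th path at distance `j` from the common initial vertex:  `j = 0` gives the common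
initial vertex, `j = k i` the common terminal vertex, and `0 < j < k i` gives the
`j`-th interior vertex of the `i`-th path. -/
def pcVert {ι : Type} (k : ι → ℕ) (i : ι) (j : ℕ) :
    Bool ⊕ ((i : ι) × Fin (k i - 1)) :=
  if h0 : j = 0 then Sum.inl false
  else if h : j < k i then Sum.inr ⟨i, ⟨j - 1, by omega⟩⟩
  else Sum.inl true

/-- The parallel composition of the family of paths `P i` of lengths `k i` (`i : ι`):
the `i`-th path has `k i` edges indexed by `Fin (k i)`, its `j`-th edge joining the
vertices of the `i`-th path at distances `j` and `j + 1` from the common initial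
vertex.  All the initial vertices of the paths are identified to a single vertex and
all the terminal vertices are identified to a single vertex. -/
def parallelComp {ι : Type} (k : ι → ℕ) :
    Multigraph (Bool ⊕ ((i : ι) × Fin (k i - 1))) ((i : ι) × Fin (k i)) where
  fst e := pcVert k e.1 e.2.1
  snd e := pcVert k e.1 (e.2.1 + 1)
  ne := by
    rintro ⟨i, j⟩ h
    have hj := j.2
    simp only [pcVert] at h
    split_ifs at h <;> simp_all <;> omega

/-- The monomial `f i`: the product of the edges of the `i`-th path of the parallel
composition in odd positions (positions `1, 3, 5, ...`, i.e. indices `0, 2, 4, ...`). -/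
noncomputable def oddProd {ι : Type} (K : Type) [Field K] (k : ι → ℕ) (i : ι) :
    MvPolynomial ((i : ι) × Fin (k i)) K :=
  ∏ m : Fin ((k i + 1) / 2), X ⟨i, ⟨2 * m.1, by have := m.2; omega⟩⟩

/-- The monomial `g i`: the product of the edges of the `i`-th path of the parallel
composition in even positions (positions `2, 4, 6, ...`, i.e. indices `1, 3, 5, ...`). -/
noncomputable def evenProd {ι : Type} (K : Type) [Field K] (k : ι → ℕ) (i : ι) :
    MvPolynomial ((i : ι) × Fin (k i)) K :=
  ∏ m : Fin (k i / 2), X ⟨i, ⟨2 * m.1 + 1, by have := m.2; omega⟩⟩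

/-!
An independent set `A` of non-isolated vertices which misses some edge `e₀` forces
`reg G ≥ |A| (q - 2)`. Put the value `1` on the vertices outside `A`: the edges at `v ∈ A` then have
coordinate `y_v`, and the remaining edges have coordinate `1`, so a form of degree `d` on `X`
restricts to a polynomial of degree at most `d` in the `y_v ∈ Kˣ`. If `HF_G(d) = |X|`, every
function on the points of `X` that is homogeneous of degree `d` comes from a form, in particular
`t_{e₀}^(d + |A|) ∏ v ∈ A, t_{e_v}⁻¹`, where `e_v` is an edge at `v`. It restricts to `∏ v, y_v⁻¹`,
and by the Chevalley–Warning argument a polynomial that agrees with `∏ v, y_v⁻¹` on `(Kˣ)^A` has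
degree at least `|A| (q - 2)`. If `A` meets every edge, one removes a vertex from it first.

In a parallel composition of paths, the interior vertices at odd distance from the terminal vertex
along their path are independent, there are `⌊k_i / 2⌋` of them on the `i`-th path, and they miss
the first edge of every path of odd length.
-/

section Polynomial

variable {σ τ R : Type*} [CommSemiring R]

theorem eval_smul_of_isHomogeneous {f : MvPolynomial σ R} {d : ℕ} (hf : f.IsHomogeneous d)
    (c : R) (t : σ → R) : eval (c • t) f = c ^ d * eval t f := by
  rw [eval_eq, eval_eq, Finset.mul_sum]
  refine Finset.sum_congr rfl fun m hm => ?_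
  have hprod : ∏ i ∈ m.support, (c • t) i ^ m i = c ^ d * ∏ i ∈ m.support, t i ^ m i := by
    rw [hf.degree_eq_sum_deg_support hm, ← Finset.prod_pow_eq_pow_sum,
      ← Finset.prod_mul_distrib]
    simp only [Pi.smul_apply, smul_eq_mul, mul_pow]
  rw [hprod, mul_left_comm]

theorem totalDegree_aeval_le {n : ℕ} {g : σ → MvPolynomial τ R} (hg : ∀ i, (g i).totalDegree ≤ n)
    (f : MvPolynomial σ R) : (aeval g f).totalDegree ≤ f.totalDegree * n := by
  rw [aeval_def, eval₂_eq]
  refine totalDegree_finsetSum_le fun m hm => ?_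
  calc (algebraMap R _ (coeff m f) * ∏ i ∈ m.support, g i ^ m i).totalDegree
      ≤ (∏ i ∈ m.support, g i ^ m i).totalDegree := by
        simpa [algebraMap_eq] using totalDegree_mul (C (coeff m f)) (∏ i ∈ m.support, g i ^ m i)
    _ ≤ ∑ i ∈ m.support, (g i ^ m i).totalDegree := totalDegree_finsetProd _ _
    _ ≤ ∑ i ∈ m.support, m i * n := Finset.sum_le_sum fun i _ =>
        (totalDegree_pow _ _).trans (Nat.mul_le_mul_left _ (hg i))
    _ = (∑ i ∈ m.support, m i) * n := (Finset.sum_mul _ _ _).symm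
    _ ≤ f.totalDegree * n := Nat.mul_le_mul_right _ (le_totalDegree hm)

theorem totalDegree_mul_prod_X_le [Nontrivial R] [Fintype σ] (f : MvPolynomial σ R) :
    (f * ∏ v, X v).totalDegree ≤ f.totalDegree + Fintype.card σ := by
  have hX : (∏ v : σ, (X v : MvPolynomial σ R)).totalDegree ≤ Fintype.card σ := by
    simpa using totalDegree_finsetProd Finset.univ (fun v : σ => (X v : MvPolynomial σ R))
  exact (totalDegree_mul _ _).trans (Nat.add_le_add_left hX _)

/-- Evaluation of polynomials at the points of a family `p`, as a linear map. -/
noncomputable def evalFamily {ι : Type*} (p : ι → σ → R) : MvPolynomial σ R →ₗ[R] ι → R :=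
  LinearMap.pi fun i => (aeval (p i)).toLinearMap

@[simp]
theorem evalFamily_apply {ι : Type*} (p : ι → σ → R) (f : MvPolynomial σ R) (i : ι) :
    evalFamily p f i = eval (p i) f := by
  simp [evalFamily, aeval_eq_eval]

variable {K : Type*} [Field K]

theorem sum_prod_ite_eq_zero [Fintype σ] [DecidableEq σ] [Fintype K] [DecidableEq K] :
    ∑ x : σ → K, ∏ v, (if x v = 0 then (0 : K) else 1) = (-1) ^ Fintype.card σ := by
  rw [← Fintype.prod_sum fun (_ : σ) (a : K) => if a = 0 then (0 : K) else 1]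
  simp [Finset.sum_ite, Finset.filter_ne', Finset.card_erase_of_mem, Fintype.card_pos,
    Nat.cast_pred]

theorem exists_eval_ne_prod_inv [Fintype K] [Fintype σ] {f : MvPolynomial σ K}
    (hf : f.totalDegree < Fintype.card σ * (Fintype.card K - 2)) :
    ∃ y : σ → Kˣ, eval (fun v => (y v : K)) f ≠ ∏ v, (y v : K)⁻¹ := by
  classical
  by_contra! hinv
  have hdeg : (f * ∏ v, X v).totalDegree < (Fintype.card K - 1) * Fintype.card σ := by
    have hcard : Fintype.card K - 1 = (Fintype.card K - 2) + 1 := by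
      have := Fintype.one_lt_card (α := K)
      omega
    rw [hcard, add_one_mul, mul_comm (_ - 2)]
    exact (totalDegree_mul_prod_X_le f).trans_lt (Nat.add_lt_add_right hf _)
  have heval (x : σ → K) : eval x (f * ∏ v, X v) = ∏ v, if x v = 0 then 0 else 1 := by
    by_cases hx : ∃ v, x v = 0
    · obtain ⟨v, hv⟩ := hx
      have hX : eval x (∏ v, X v) = 0 := by
        rw [map_prod]
        exact Finset.prod_eq_zero (Finset.mem_univ v) ((eval_X v).trans hv)
      rw [map_mul, hX, mul_zero]
      exact (Finset.prod_eq_zero (Finset.mem_univ v) (by rw [if_pos hv])).symm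
    · push Not at hx
      have := hinv fun v => Units.mk0 (x v) (hx v)
      simp_all [Finset.prod_ne_zero_iff]
  have hsum := sum_eval_eq_zero _ hdeg
  simp_rw [heval, sum_prod_ite_eq_zero] at hsum
  exact pow_ne_zero _ (neg_ne_zero.mpr one_ne_zero) hsum

theorem exists_isHomogeneous_one_separating {p u : σ → K} (hp : ∀ e, p e ≠ 0) (hu : ∀ e, u e ≠ 0)
    (h : p ∉ MulAction.orbit Kˣ u) :
    ∃ f : MvPolynomial σ K, f.IsHomogeneous 1 ∧ eval u f = 0 ∧ eval p f ≠ 0 := by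
  by_contra! hsep
  have hcross (a b : σ) : u a * p b = u b * p a := by
    have := hsep (C (u a) * X b - C (u b) * X a)
      ((isHomogeneous_C_mul_X _ _).sub (isHomogeneous_C_mul_X _ _)) (by simp [mul_comm])
    simpa [sub_eq_zero] using this
  apply h
  rcases isEmpty_or_nonempty σ with _ | ⟨⟨a⟩⟩
  · exact ⟨1, Subsingleton.elim _ _⟩
  · refine ⟨Units.mk0 (p a / u a) (div_ne_zero (hp a) (hu a)), funext fun b => ?_⟩
    have := hu a
    simp only [Pi.smul_apply, Units.smul_def, Units.val_mk0, smul_eq_mul]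
    field_simp
    linear_combination hcross b a

theorem map_evalFamily_homogeneousSubmodule_eq_top {ι : Type*} [Fintype ι] {p : ι → σ → K}
    (hsep : ∀ i j, i ≠ j →
      ∃ f : MvPolynomial σ K, f.IsHomogeneous 1 ∧ eval (p j) f = 0 ∧ eval (p i) f ≠ 0) :
    (homogeneousSubmodule σ K (Fintype.card ι - 1)).map (evalFamily p) = ⊤ := by
  classical
  choose! s hs_hom hs_zero hs_ne using hsep
  rw [eq_top_iff, ← (Pi.basisFun K ι).span_eq, Submodule.span_le]
  rintro _ ⟨i, rfl⟩
  let g : MvPolynomial σ K := ∏ j ∈ Finset.univ.erase i, s i j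
  have hg_hom : g.IsHomogeneous (Fintype.card ι - 1) := by
    simpa [Finset.card_erase_of_mem] using
      IsHomogeneous.prod (Finset.univ.erase i) (s i) (fun _ => 1) fun j hj =>
        hs_hom i j (Finset.ne_of_mem_erase hj).symm
  have hg_ne : eval (p i) g ≠ 0 := by
    rw [map_prod, Finset.prod_ne_zero_iff]
    exact fun j hj => hs_ne i j (Finset.ne_of_mem_erase hj).symm
  have hg_zero (j : ι) (hj : j ≠ i) : eval (p j) g = 0 := by
    rw [map_prod]
    exact Finset.prod_eq_zero (by simpa using hj) (hs_zero i j hj.symm)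
  refine ⟨(eval (p i) g)⁻¹ • g, Submodule.smul_mem _ _ hg_hom, funext fun j => ?_⟩
  by_cases hj : j = i
  · subst hj
    simp [hg_ne]
  · simp [hg_zero j hj, hj]

end Polynomial

theorem finrank_map_eq_finrank_map {R M N P : Type*} [Ring R] [AddCommGroup M] [Module R M]
    [AddCommGroup N] [Module R N] [AddCommGroup P] [Module R P] {S : Submodule R M}
    {f : M →ₗ[R] N} {g : M →ₗ[R] P} (h : ∀ x ∈ S, f x = 0 ↔ g x = 0) :
    Module.finrank R (S.map f) = Module.finrank R (S.map g) := by
  have hker : LinearMap.ker (f.domRestrict S) = LinearMap.ker (g.domRestrict S) := by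
    ext x
    exact h x x.2
  rw [← LinearMap.range_domRestrict, ← LinearMap.range_domRestrict]
  exact ((f.domRestrict S).quotKerEquivRange.symm.trans
    ((Submodule.quotEquivOfEq _ _ hker).trans (g.domRestrict S).quotKerEquivRange)).finrank_eq

namespace Multigraph

section Hilbert

variable {V E : Type} {K : Type} [Field K] (G : Multigraph V E)

theorem point_ne_zero (x : V → Kˣ) (e : E) : G.point K x e ≠ 0 :=
  mul_ne_zero (x _).ne_zero (x _).ne_zero

/-- A chosen vector of homogeneous coordinates, of the form `G.point K x`, for a point of the
projective toric set. -/
noncomputable def toricRep (P : G.toricSet K) : E → K :=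
  G.point K P.2.choose

theorem orbit_toricRep (P : G.toricSet K) : MulAction.orbit Kˣ (G.toricRep P) = P :=
  P.2.choose_spec

theorem exists_point_eq_smul_toricRep (x : V → Kˣ) :
    ∃ (P : G.toricSet K) (c : Kˣ), G.point K x = c • G.toricRep P := by
  let P : G.toricSet K := ⟨_, x, rfl⟩
  have hx : G.point K x ∈ MulAction.orbit Kˣ (G.toricRep P) :=
    G.orbit_toricRep P ▸ MulAction.mem_orbit_self _
  obtain ⟨c, hc⟩ := hx
  exact ⟨P, c, hc.symm⟩

theorem mem_vanishingIdeal_iff_of_isHomogeneous {f : MvPolynomial E K} {d : ℕ}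
    (hf : f.IsHomogeneous d) : f ∈ G.vanishingIdeal K ↔ evalFamily G.toricRep f = 0 := by
  constructor
  · intro h
    ext P
    simpa [homogeneousComponent_eq_self hf, toricRep] using h P.2.choose d
  · intro h x n
    rw [homogeneousComponent_of_mem hf]
    split_ifs
    · obtain ⟨P, c, hc⟩ := G.exists_point_eq_smul_toricRep x
      rw [hc, Units.smul_def, eval_smul_of_isHomogeneous hf, ← evalFamily_apply, h,
        Pi.zero_apply, mul_zero]
    · exact map_zero _

theorem hilbert_eq_finrank_map_evalFamily (d : ℕ) :
    G.hilbert K d =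
      Module.finrank K ((homogeneousSubmodule E K d).map (evalFamily (R := K) G.toricRep)) :=
  finrank_map_eq_finrank_map fun _ hf =>
    Ideal.Quotient.eq_zero_iff_mem.trans (G.mem_vanishingIdeal_iff_of_isHomogeneous hf)

variable [Finite E] [Finite K]

theorem hilbert_eq_ncard_toricSet_iff (d : ℕ) :
    G.hilbert K d = (G.toricSet K).ncard ↔
      (homogeneousSubmodule E K d).map (evalFamily (R := K) G.toricRep) = ⊤ := by
  have := Fintype.ofFinite (G.toricSet K)
  rw [hilbert_eq_finrank_map_evalFamily, ← Nat.card_coe_set_eq, Nat.card_eq_fintype_card,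
    ← Module.finrank_fintype_fun_eq_card K]
  exact ⟨Submodule.eq_top_of_finrank_eq, fun h => by rw [h, finrank_top]⟩

variable (K) in
theorem exists_hilbert_eq_ncard_toricSet : ∃ d, G.hilbert K d = (G.toricSet K).ncard := by
  have := Fintype.ofFinite (G.toricSet K)
  refine ⟨Fintype.card (G.toricSet K) - 1, (G.hilbert_eq_ncard_toricSet_iff _).mpr ?_⟩
  refine map_evalFamily_homogeneousSubmodule_eq_top fun P Q hPQ => ?_
  refine exists_isHomogeneous_one_separating (G.point_ne_zero _) (G.point_ne_zero _) fun h => ?_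
  apply hPQ
  rw [Subtype.ext_iff, ← G.orbit_toricRep P, ← G.orbit_toricRep Q]
  exact MulAction.orbit_eq_iff.mpr h

theorem exists_isHomogeneous_eval_point_eq {d : ℕ} (hd : G.hilbert K d = (G.toricSet K).ncard)
    {F : (E → K) → K} (hF : ∀ (c : Kˣ) (t : E → K), F (c • t) = (c : K) ^ d * F t) :
    ∃ f : MvPolynomial E K, f.IsHomogeneous d ∧
      ∀ x : V → Kˣ, eval (G.point K x) f = F (G.point K x) := by
  obtain ⟨f, hf, hfF⟩ : (fun P => F (G.toricRep P)) ∈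
      (homogeneousSubmodule E K d).map (evalFamily (R := K) G.toricRep) :=
    (G.hilbert_eq_ncard_toricSet_iff d).mp hd ▸ Submodule.mem_top
  refine ⟨f, hf, fun x => ?_⟩
  obtain ⟨P, c, hc⟩ := G.exists_point_eq_smul_toricRep x
  rw [hc, hF, Units.smul_def, eval_smul_of_isHomogeneous hf, ← evalFamily_apply, hfF]

end Hilbert

section Independent

variable {V E : Type} {G : Multigraph V E} {A : Finset V}

/-- `A` is an independent set of vertices: no edge has both endpoints in `A`. -/
def IsIndep (G : Multigraph V E) (A : Finset V) : Prop :=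
  ∀ e, G.fst e ∈ A → G.snd e ∉ A

theorem IsIndep.mono {B : Finset V} (hA : G.IsIndep A) (hBA : B ⊆ A) : G.IsIndep B :=
  fun e hfst hsnd => hA e (hBA hfst) (hBA hsnd)

theorem IsIndep.eq_of_incident (hA : G.IsIndep A) {v w : V} (hv : v ∈ A) (hw : w ∈ A) {e : E}
    (hve : G.Incident v e) (hwe : G.Incident w e) : v = w := by
  rcases hve with rfl | rfl <;> rcases hwe with rfl | rfl
  · rfl
  · exact absurd hw (hA e hv)
  · exact absurd hv (hA e hw)
  · rfl

section ExtendOne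

variable {M N : Type*}

/-- The vertex assignment that extends `y` by the value `1` outside `A`. -/
noncomputable def extendOne [One M] (y : A → M) : V → M :=
  Function.extend Subtype.val y 1

theorem extendOne_coe [One M] (y : A → M) (v : A) : extendOne y v = y v :=
  Subtype.val_injective.extend_apply _ _ _

theorem extendOne_of_notMem [One M] (y : A → M) {v : V} (hv : v ∉ A) : extendOne y v = 1 :=
  Function.extend_apply' _ _ _ (by simpa using hv)

theorem map_extendOne [One M] [One N] {F : Type*} [FunLike F M N] [OneHomClass F M N] (φ : F)
    (y : A → M) (v : V) : φ (extendOne y v) = extendOne (φ ∘ y) v := by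
  rw [extendOne, Function.apply_extend φ, extendOne]
  congr 1
  exact funext fun _ => map_one φ

variable [MulOneClass M] {e : E}

theorem IsIndep.extendOne_fst_mul_extendOne_snd (hA : G.IsIndep A) (y : A → M) {v : A}
    (hv : G.Incident v e) : extendOne y (G.fst e) * extendOne y (G.snd e) = y v := by
  rcases hv with hv | hv
  · have hsnd : G.snd e ∉ A := hA e (hv ▸ v.2)
    rw [extendOne_of_notMem y hsnd, hv, extendOne_coe, mul_one]
  · have hfst : G.fst e ∉ A := fun h => hA e h (hv ▸ v.2)
    rw [extendOne_of_notMem y hfst, hv, extendOne_coe, one_mul]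

theorem extendOne_fst_mul_extendOne_snd_eq_one (y : A → M) (he : ∀ v ∈ A, ¬ G.Incident v e) :
    extendOne y (G.fst e) * extendOne y (G.snd e) = 1 := by
  rw [extendOne_of_notMem y fun h => he _ h (Or.inl rfl),
    extendOne_of_notMem y fun h => he _ h (Or.inr rfl), one_mul]

end ExtendOne

variable (K : Type) [Field K]

/-- The coordinate of the edge `e` at the vertex assignment with indeterminate values on `A` and the
value `1` outside `A`. -/
noncomputable def edgePolynomial (G : Multigraph V E) (A : Finset V) (e : E) : MvPolynomial A K :=
  extendOne X (G.fst e) * extendOne X (G.snd e)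

theorem IsIndep.totalDegree_edgePolynomial_le_one (hA : G.IsIndep A) (e : E) :
    (G.edgePolynomial K A e).totalDegree ≤ 1 := by
  by_cases he : ∃ v ∈ A, G.Incident v e
  · obtain ⟨v, hv, hve⟩ := he
    rw [edgePolynomial, hA.extendOne_fst_mul_extendOne_snd X (v := ⟨v, hv⟩) hve, totalDegree_X]
  · push Not at he
    simp [edgePolynomial, extendOne_fst_mul_extendOne_snd_eq_one X he]

theorem eval_edgePolynomial (y : A → Kˣ) (e : E) :
    eval (fun v => (y v : K)) (G.edgePolynomial K A e) = G.point K (extendOne y) e := by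
  have hvert (v : V) : eval (fun v => (y v : K)) (extendOne X v) = (extendOne y v : Kˣ) := by
    rw [map_extendOne, ← Units.coeHom_apply, map_extendOne]
    congr 1
    ext v
    simp
  rw [edgePolynomial, map_mul, hvert, hvert, point]

theorem eval_aeval_edgePolynomial (y : A → Kˣ) (f : MvPolynomial E K) :
    eval (fun v => (y v : K)) (aeval (G.edgePolynomial K A) f) =
      eval (G.point K (extendOne y)) f := by
  rw [← funext (eval_edgePolynomial K y)]
  simp only [← aeval_eq_eval, comp_aeval_apply]

variable [Fintype K] [Finite E]

theorem IsIndep.card_mul_le_reg (hA : G.IsIndep A) (hinc : ∀ v ∈ A, ∃ e, G.Incident v e) {e₀ : E}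
    (he₀ : ∀ v ∈ A, ¬ G.Incident v e₀) : A.card * (Fintype.card K - 2) ≤ G.reg K := by
  refine le_csInf (G.exists_hilbert_eq_ncard_toricSet K) fun d hd => ?_
  by_contra! hlt
  choose e he using fun v : A => hinc v v.2
  let F : (E → K) → K := fun t => t e₀ ^ (d + A.card) * ∏ v, (t (e v))⁻¹
  have hF (c : Kˣ) (t : E → K) : F (c • t) = (c : K) ^ d * F t := by
    simp only [F, Pi.smul_apply, Units.smul_def, smul_eq_mul, mul_inv, Finset.prod_mul_distrib,
      Finset.prod_const, Finset.card_univ, Fintype.card_coe]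
    rw [mul_pow, pow_add, inv_pow]
    field_simp
  obtain ⟨f, hf, hfF⟩ := G.exists_isHomogeneous_eval_point_eq hd hF
  have hdeg : (aeval (G.edgePolynomial K A) f).totalDegree ≤ d :=
    calc (aeval (G.edgePolynomial K A) f).totalDegree
        ≤ f.totalDegree * 1 := totalDegree_aeval_le (hA.totalDegree_edgePolynomial_le_one K) f
      _ ≤ d := (mul_one f.totalDegree).trans_le hf.totalDegree_le
  obtain ⟨y, hy⟩ := exists_eval_ne_prod_inv (hdeg.trans_lt (by rwa [Fintype.card_coe]))
  apply hy
  have hpoint_e (v : A) : G.point K (extendOne y) (e v) = y v := by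
    rw [point, ← Units.val_mul, hA.extendOne_fst_mul_extendOne_snd y (he v)]
  have hpoint_e₀ : G.point K (extendOne y) e₀ = 1 := by
    rw [point, ← Units.val_mul, extendOne_fst_mul_extendOne_snd_eq_one y he₀, Units.val_one]
  rw [eval_aeval_edgePolynomial, hfF]
  simp only [F, hpoint_e, hpoint_e₀, one_pow, one_mul]

theorem IsIndep.card_sub_one_mul_le_reg (hA : G.IsIndep A)
    (hinc : ∀ v ∈ A, ∃ e, G.Incident v e) :
    (A.card - 1) * (Fintype.card K - 2) ≤ G.reg K := by
  classical
  rcases A.eq_empty_or_nonempty with rfl | ⟨v, hv⟩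
  · simp
  obtain ⟨e, he⟩ := hinc v hv
  rw [← Finset.card_erase_of_mem hv]
  refine (hA.mono (A.erase_subset v)).card_mul_le_reg K
    (fun w hw => hinc w (Finset.mem_of_mem_erase hw)) (e₀ := e) fun w hw hwe => ?_
  exact Finset.ne_of_mem_erase hw (hA.eq_of_incident (Finset.mem_of_mem_erase hw) hv hwe he)

end Independent

end Multigraph

section ParallelComp

variable {ι : Type} {k : ι → ℕ}

theorem eq_and_eq_of_pcVert_eq {i i' : ι} {j j' : ℕ} (hj₀ : 0 < j) (hj : j < k i)
    (h : pcVert k i j = pcVert k i' j') : i = i' ∧ j = j' := by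
  rw [pcVert, dif_neg hj₀.ne', dif_pos hj, pcVert] at h
  split_ifs at h
  obtain ⟨rfl, hfin⟩ := Sigma.mk.inj (Sum.inr.inj h)
  have hsub : j - 1 = j' - 1 := Fin.mk.inj (eq_of_heq hfin)
  exact ⟨rfl, by omega⟩

variable (k)

/-- The vertex of the `i`-th path of the parallel composition at distance `2 * n + 1` from the
terminal vertex along the path. For `n < k i / 2` it is an interior vertex. -/
def oddVertex : (i : ι) × Fin (k i / 2) ↪ Bool ⊕ ((i : ι) × Fin (k i - 1)) where
  toFun a := pcVert k a.1 (k a.1 - (2 * a.2 + 1))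
  inj' := by
    rintro ⟨i, m⟩ ⟨i', n⟩ h
    have hm := m.2
    have hn := n.2
    obtain ⟨rfl, hdist⟩ := eq_and_eq_of_pcVert_eq (by dsimp only; omega) (by dsimp only; omega) h
    congr 1
    ext
    dsimp only at hdist
    omega

variable [Fintype ι]

/-- The set of interior vertices of the parallel composition whose distance from the terminal vertex
along their path is odd. -/
def oddVertices : Finset (Bool ⊕ ((i : ι) × Fin (k i - 1))) :=
  Finset.univ.map (oddVertex k)

theorem card_oddVertices : (oddVertices k).card = ∑ i, k i / 2 := by
  simp [oddVertices]

variable {k}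

theorem pos_and_odd_of_pcVert_mem_oddVertices {i : ι} {j : ℕ}
    (h : pcVert k i j ∈ oddVertices k) : 0 < j ∧ Odd (k i - j) := by
  obtain ⟨⟨i', n⟩, -, hn⟩ := Finset.mem_map.mp h
  have := n.2
  obtain ⟨rfl, rfl⟩ := eq_and_eq_of_pcVert_eq (by dsimp only; omega) (by dsimp only; omega) hn
  rw [Nat.odd_iff]
  dsimp only
  omega

variable (k) in
theorem isIndep_oddVertices : (parallelComp k).IsIndep (oddVertices k) := by
  rintro ⟨i, j⟩ hfst hsnd
  have hodd := (pos_and_odd_of_pcVert_mem_oddVertices (i := i) (j := j) hfst).2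
  have hodd' := (pos_and_odd_of_pcVert_mem_oddVertices (i := i) (j := j + 1) hsnd).2
  rw [Nat.odd_iff] at hodd hodd'
  omega

theorem exists_incident_of_mem_oddVertices {v : Bool ⊕ ((i : ι) × Fin (k i - 1))}
    (hv : v ∈ oddVertices k) : ∃ e, (parallelComp k).Incident v e := by
  obtain ⟨⟨i, n⟩, -, rfl⟩ := Finset.mem_map.mp hv
  exact ⟨⟨i, k i - (2 * n + 1), by have := n.2; omega⟩, Or.inl rfl⟩

theorem not_incident_zero_of_mem_oddVertices {i : ι} (hi : Odd (k i))
    {v : Bool ⊕ ((i : ι) × Fin (k i - 1))} (hv : v ∈ oddVertices k) :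
    ¬ (parallelComp k).Incident v ⟨i, 0, hi.pos⟩ := by
  rintro (rfl | rfl)
  · exact (pos_and_odd_of_pcVert_mem_oddVertices (i := i) (j := 0) hv).1.false
  · have := (pos_and_odd_of_pcVert_mem_oddVertices (i := i) (j := 1) hv).2
    rw [Nat.odd_iff] at this hi
    omega

end ParallelComp

theorem reg_parallelComp_same_parity_lower_bound_general (K : Type) [Field K] [Fintype K]
    {ι : Type} [Fintype ι] (k : ι → ℕ) :
    ((∃ i, Odd (k i)) → (∑ i, k i / 2) * (Fintype.card K - 2) ≤ (parallelComp k).reg K) ∧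
      ((∑ i, k i / 2) - 1) * (Fintype.card K - 2) ≤ (parallelComp k).reg K := by
  rw [← card_oddVertices]
  refine ⟨fun ⟨i, hi⟩ => ?_, ?_⟩
  · exact (isIndep_oddVertices k).card_mul_le_reg K (fun _ => exists_incident_of_mem_oddVertices)
      fun _ => not_incident_zero_of_mem_oddVertices hi
  · exact (isIndep_oddVertices k).card_sub_one_mul_le_reg K
      fun _ => exists_incident_of_mem_oddVertices

/-- **Lemma 3.1.**  Let `G` be the parallel composition of `r ≥ 2` paths of lengths
`k 0, ..., k (r-1)`, all of the same parity.  If all `k i` are odd then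
`reg G ≥ (⌊k 0/2⌋ + ... + ⌊k (r-1)/2⌋)(q-2)`; if all `k i` are even then
`reg G ≥ (k 0/2 + ... + k (r-1)/2 - 1)(q-2)`, where `q = |K|`. -/
theorem reg_parallelComp_same_parity_lower_bound
    (K : Type) [Field K] [Fintype K] (r : ℕ) (hr : 2 ≤ r)
    (k : Fin r → ℕ) (hk : ∀ i, 0 < k i)
    (hpar : ∀ i j, (Odd (k i) ↔ Odd (k j))) :
    ((∀ i, Odd (k i)) →
      (∑ i, k i / 2) * (Fintype.card K - 2) ≤ (parallelComp k).reg K) ∧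
    ((∀ i, Even (k i)) →
      ((∑ i, k i / 2) - 1) * (Fintype.card K - 2) ≤ (parallelComp k).reg K) := by
  have general := reg_parallelComp_same_parity_lower_bound_general K k
  exact ⟨fun hodd => general.1 ⟨⟨0, by omega⟩, hodd _⟩, fun _ => general.2⟩
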